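/- (Preconditioned steepest descent, single-step bound.) Let A ∈ ℂ^{m×n} have full column rank with singular values σ₁ ≥ σ₂ ≥ … ≥ σ_n > 0, and let P ∈ ℂ^{n×n} be invertible. Define γ := inf over t > 0 of the spectral norm ‖I − t·P*A*AP‖. Let 2 ≤ i ≤ n and let v ∈ ℂⁿ be a unit vector with σ_i ≤ ‖Av‖ < σ_{i−1}. Define the search direction w := P(P*(A*(Av) − ‖Av‖²·v)) and let v_PSD be a unit vector in span{v, w} minimizing ‖Az‖ over all unit vectors z ∈ span{v, w}. Set gap_i := (σ_{i−1}² − σ_i²)/σ_i² and q := γ + (1−γ)/(1+gap_i). Then either ‖A v_PSD‖ ≤ σ_i, or (‖A v_PSD‖² − σ_i²)/(σ_{i−1}² − ‖A v_PSD‖²) ≤ q² · (‖Av‖² − σ_i²)/(σ_{i−1}² − ‖Av‖²). -/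

import Mathlib

/-!
Fix `g` with `γ < g < 1` and a step size `t > 0` with `‖I - t PᴴAᴴAP‖ ≤ g`. The vector
`v' = v - t w` lies in `span {v, w}`, so by minimality it suffices to bound its Rayleigh quotient
`‖Av'‖² / ‖v'‖²` (the preconditioned inverse iteration estimate); then `g` decreases to `γ`.
If `γ ≥ 1` then `q ≥ 1` and `‖A vPSD‖ ≤ ‖Av‖` is enough.

Write `H = AᴴA`, `λ = ‖Av‖²` and `p = v - λ H⁻¹ v`. Then `v' - λ H⁻¹ v = (I - t PPᴴH) p`, and
`I - t PPᴴH` contracts the energy norm `‖A ·‖` by `g` (`energy_contraction`). In the eigenbasis of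
`H`, put `βⱼ = σⱼ⁻²`, `μ = 1/λ`, `xⱼ = σⱼ vⱼ` and `yⱼ = σⱼ v'ⱼ / λ`. The contraction says that `y`
lies in the ball with centre `(βⱼ xⱼ)` and radius `g ‖((βⱼ - μ) xⱼ)‖`, where
`∑ (βⱼ - μ) |xⱼ|² = 0`, and the required bound is `∑ (βⱼ - c) |yⱼ|² ≥ 0` for an explicit `c`.

This is proved in `diagonal_bound` by Lagrangian duality with explicit multipliers, one for the
ball and one for the normalization of `x`. They are the multipliers of the two-dimensional problem
with spectrum `{a, b}`, `a = σᵢ⁻²`, `b = σᵢ₋₁⁻²`. With them everything reduces to the sign of a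
cubic in `β` which vanishes at `a` and `b` and whose third root is nonpositive (`scalar_key`);
hence it is nonnegative at each `βⱼ`, as no `βⱼ` lies strictly between `b` and `a`.
-/

open Matrix

/-- The linear action of a complex matrix on Euclidean space: `mulE A v = A v`. -/
noncomputable def mulE {m n : ℕ} (A : Matrix (Fin m) (Fin n) ℂ)
    (v : EuclideanSpace ℂ (Fin n)) : EuclideanSpace ℂ (Fin m) :=
  Matrix.toEuclideanLin A v

/-- `S` is a subspace embedding for `A` with distortion `η`:
`(1-η)‖Ay‖² ≤ ‖SAy‖² ≤ (1+η)‖Ay‖²` for all `y`. -/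
def IsSubspaceEmbedding {d m n : ℕ} (S : Matrix (Fin d) (Fin m) ℂ)
    (A : Matrix (Fin m) (Fin n) ℂ) (η : ℝ) : Prop :=
  ∀ y : EuclideanSpace ℂ (Fin n),
    (1 - η) * ‖mulE A y‖ ^ 2 ≤ ‖mulE (S * A) y‖ ^ 2 ∧
      ‖mulE (S * A) y‖ ^ 2 ≤ (1 + η) * ‖mulE A y‖ ^ 2

/-- `σ` lists the singular values of `A` in decreasing order: `σ` is antitone, nonnegative,
and there is an orthonormal (eigen)basis `B` with `AᴴA (B i) = σᵢ² • B i`. -/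
def HasSingularValues {m n : ℕ} (A : Matrix (Fin m) (Fin n) ℂ) (σ : Fin n → ℝ) : Prop :=
  Antitone σ ∧ (∀ i, 0 ≤ σ i) ∧
    ∃ B : Fin n → EuclideanSpace ℂ (Fin n), Orthonormal ℂ B ∧
      ∀ i, mulE (Aᴴ * A) (B i) = ((σ i ^ 2 : ℝ) : ℂ) • B i

/-- The spectral norm (largest singular value) of a matrix, as the operator norm of its
action between Euclidean spaces. -/
noncomputable def specNorm {m n : ℕ} (A : Matrix (Fin m) (Fin n) ℂ) : ℝ :=
  ‖LinearMap.toContinuousLinearMap (Matrix.toEuclideanLin A)‖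


/-- The scalar inequality behind the dual certificate. The right side minus the left side is
`g / Q * (β - a) * (β - b)` times an affine function of `β` with nonnegative coefficients. -/
lemma scalar_key {a b μ g q Q β : ℝ} (hb : 0 < b) (hbμ : b < μ) (hμa : μ ≤ a)
    (hg0 : 0 < g) (hg1 : g < 1) (hq : q = g + (1 - g) * b / a)
    (hQ : Q = (μ - b) + q ^ 2 * (a - μ)) (hβ0 : 0 < β) (hβ : β ≤ b ∨ a ≤ β) :
    ((a - b) / Q * (g ^ 2 * (β - μ) ^ 2 + g * (b + g * (μ - b)) * (β - μ))) *
        (g * β + (1 - g) * b) ≤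
      g * (β - (a * (μ - b) + q ^ 2 * (a - μ) * b) / Q) * β ^ 2 := by
  have ha : 0 < a := by linarith
  have hqg : g ≤ q := by
    rw [hq]
    have : 0 ≤ (1 - g) * b / a := by
      apply div_nonneg _ ha.le
      apply mul_nonneg _ hb.le
      linarith
    linarith
  have hqg2 : g ^ 2 ≤ q ^ 2 := by gcongr
  have hQpos : 0 < Q := by
    rw [hQ]
    have := mul_nonneg (sq_nonneg q) (sub_nonneg.2 hμa)
    linarith
  have hρ : g ^ 2 * (a - b) ≤ Q := by
    rw [hQ]
    have h1 := mul_le_mul_of_nonneg_right hqg2 (sub_nonneg.2 hμa)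
    have h2 : g ^ 2 * (μ - b) ≤ μ - b := by
      have : g ^ 2 ≤ 1 := by nlinarith
      nlinarith
    nlinarith
  have hprod : 0 ≤ (β - a) * (β - b) := by
    rcases hβ with h | h
    · exact mul_nonneg_of_nonpos_of_nonpos (by linarith) (by linarith)
    · exact mul_nonneg (by linarith) (by linarith)
  have hlin : 0 ≤ (Q - g ^ 2 * (a - b)) * β + (a - b) * b * (1 - g) ^ 2 * μ / a := by
    have h1 : 0 ≤ (Q - g ^ 2 * (a - b)) * β := mul_nonneg (by linarith) hβ0.le
    have h2 : 0 ≤ (a - b) * b * (1 - g) ^ 2 * μ / a := by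
      have : 0 ≤ a - b := by linarith
      have : 0 ≤ μ := by linarith
      positivity
    linarith
  have key : g * (β - (a * (μ - b) + q ^ 2 * (a - μ) * b) / Q) * β ^ 2 -
      ((a - b) / Q * (g ^ 2 * (β - μ) ^ 2 + g * (b + g * (μ - b)) * (β - μ))) *
        (g * β + (1 - g) * b) =
      g / Q * (((β - a) * (β - b)) *
        ((Q - g ^ 2 * (a - b)) * β + (a - b) * b * (1 - g) ^ 2 * μ / a)) := by
    have hQ0 := hQpos.ne'
    field_simp
    rw [hQ, hq]
    field_simp
    ring
  have := mul_nonneg (div_nonneg hg0.le hQpos.le) (mul_nonneg hprod hlin)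
  linarith

/-- A lower bound, attained at `y = τ z / (s + τ)`, for `s|y|² + τ|y - z|²`. -/
lemma square_completion (s τ : ℝ) (h : 0 < s + τ) (y z : ℂ) :
    s * τ / (s + τ) * ‖z‖ ^ 2 ≤ s * ‖y‖ ^ 2 + τ * ‖y - z‖ ^ 2 := by
  rw [div_mul_eq_mul_div, div_le_iff₀ h]
  simp only [← Complex.normSq_eq_norm_sq, Complex.normSq_apply, Complex.sub_re, Complex.sub_im]
  nlinarith [sq_nonneg ((s + τ) * y.re - τ * z.re), sq_nonneg ((s + τ) * y.im - τ * z.im)]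

/-- If `x` has Rayleigh quotient `μ` for `diag β`, and `y` lies
in the ball around `(βⱼ xⱼ)` of radius `g ‖((βⱼ - μ) xⱼ)‖`, then the Rayleigh quotient of `y` is at
least `c`, the number with `(a - c) / (c - b) = q² (a - μ) / (μ - b)`. -/
lemma diagonal_bound {ι : Type*} [Fintype ι] {a b μ g q Q c : ℝ} (β : ι → ℝ) (x y : ι → ℂ)
    (hb : 0 < b) (hbμ : b < μ) (hμa : μ ≤ a)
    (hg0 : 0 < g) (hg1 : g < 1) (hq : q = g + (1 - g) * b / a)
    (hQ : Q = (μ - b) + q ^ 2 * (a - μ))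
    (hc : c = (a * (μ - b) + q ^ 2 * (a - μ) * b) / Q)
    (hβ0 : ∀ j, 0 < β j) (hβ : ∀ j, β j ≤ b ∨ a ≤ β j)
    (hx : ∑ j, (β j - μ) * ‖x j‖ ^ 2 = 0)
    (hy : ∑ j, ‖y j - β j * x j‖ ^ 2 ≤ g ^ 2 * ∑ j, (β j - μ) ^ 2 * ‖x j‖ ^ 2) :
    0 ≤ ∑ j, (β j - c) * ‖y j‖ ^ 2 := by
  have ha : 0 < a := by linarith
  have hQpos : 0 < Q := by
    rw [hQ]
    have := mul_nonneg (sq_nonneg q) (sub_nonneg.2 hμa)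
    linarith
  have hq0 : 0 ≤ q := by
    rw [hq]
    have : 0 ≤ 1 - g := by linarith
    positivity
  have hq1 : q ≤ 1 := by
    rw [hq, mul_div_assoc]
    have : b / a ≤ 1 := by rw [div_le_one ha]; linarith
    nlinarith
  have hρ : 1 ≤ (a - b) / Q := by
    rw [le_div_iff₀ hQpos, hQ]
    have : q ^ 2 ≤ 1 := by nlinarith
    nlinarith
  have hc0 : 0 ≤ c := by
    rw [hc]
    have : 0 ≤ μ - b := by linarith
    have : 0 ≤ a - μ := by linarith
    positivity
  -- `τ / g` is the multiplier of the ball constraint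
  set τ := g * c + (1 - g) * b with hτ
  have hτ0 : 0 < τ := by
    have : 0 < (1 - g) * b := mul_pos (by linarith) hb
    positivity
  set ρ := (a - b) / Q with hρdef
  have point : ∀ j, τ * (ρ * (g ^ 2 * ((β j - μ) ^ 2 * ‖x j‖ ^ 2)
        + g * (b + g * (μ - b)) * ((β j - μ) * ‖x j‖ ^ 2))) ≤
      g * ((β j - c) * ‖y j‖ ^ 2) + τ * ‖y j - β j * x j‖ ^ 2 := by
    intro j
    have hden : g * (β j - c) + τ = g * β j + (1 - g) * b := by rw [hτ]; ring
    have hpos : 0 < g * β j + (1 - g) * b :=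
      add_pos (mul_pos hg0 (hβ0 j)) (mul_pos (by linarith) hb)
    have h1 := square_completion (g * (β j - c)) τ (by rw [hden]; exact hpos) (y j) (β j * x j)
    have h2 := scalar_key hb hbμ hμa hg0 hg1 hq hQ (hβ0 j) (hβ j)
    rw [← hc, ← le_div_iff₀ hpos] at h2
    have h3 := mul_le_mul_of_nonneg_left h2 (mul_nonneg hτ0.le (sq_nonneg ‖x j‖))
    rw [hden, norm_mul, Complex.norm_real, mul_pow, Real.norm_eq_abs, sq_abs] at h1
    calc _ = _ := by ring
      _ ≤ _ := h3
      _ = _ := by ring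
      _ ≤ _ := h1
      _ = _ := by ring
  have hsum := Finset.sum_le_sum (fun j (_ : j ∈ Finset.univ) => point j)
  simp only [← Finset.mul_sum, Finset.sum_add_distrib] at hsum
  rw [hx] at hsum
  have hS : 0 ≤ ∑ j, (β j - μ) ^ 2 * ‖x j‖ ^ 2 := Finset.sum_nonneg fun j _ => by positivity
  -- the certificate is tight for the radius enlarged by `√ρ ≥ 1`
  have h4 : τ * ∑ j, ‖y j - β j * x j‖ ^ 2 ≤
      τ * (ρ * (g ^ 2 * ∑ j, (β j - μ) ^ 2 * ‖x j‖ ^ 2)) := by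
    apply mul_le_mul_of_nonneg_left _ hτ0.le
    refine hy.trans (le_mul_of_one_le_left (by positivity) hρ)
  have h5 : 0 ≤ g * ∑ j, (β j - c) * ‖y j‖ ^ 2 := by
    rw [mul_zero, add_zero] at hsum
    linarith
  exact nonneg_of_mul_nonneg_right h5 hg0

/-- A symmetric `N` with `‖N‖ ≤ g ≤ 1` contracts the seminorm of the form `⟨p, (1 - N) p⟩` by `g`.
The difference of the two sides is `(1 - g)(g²‖p‖² - ‖Np‖²) + ⟨u, (g + N) u⟩` with `u = (g - N) p`. -/
lemma sym_contraction {E : Type*} [NormedAddCommGroup E] [InnerProductSpace ℂ E]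
    (N : E →ₗ[ℂ] E) (hN : N.IsSymmetric) {g : ℝ} (hg1 : g ≤ 1)
    (hb : ∀ x, ‖N x‖ ≤ g * ‖x‖) (p : E) :
    ‖N p‖ ^ 2 - (inner ℂ (N p) (N (N p))).re ≤ g ^ 2 * (‖p‖ ^ 2 - (inner ℂ p (N p)).re) := by
  have h1 : ‖N p‖ ^ 2 ≤ g ^ 2 * ‖p‖ ^ 2 := by
    rw [← mul_pow]; gcongr; exact hb p
  set u := (g : ℂ) • p - N p with hu
  have h2 : 0 ≤ g * ‖u‖ ^ 2 + (inner ℂ u (N u)).re := by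
    have h3 := (abs_le.1 (Complex.abs_re_le_norm (inner ℂ u (N u)))).1
    have h4 := norm_inner_le_norm (𝕜 := ℂ) u (N u)
    have h5 := mul_le_mul_of_nonneg_left (hb u) (norm_nonneg u)
    nlinarith
  have e1 : ‖u‖ ^ 2 = g ^ 2 * ‖p‖ ^ 2 - 2 * g * (inner ℂ p (N p)).re + ‖N p‖ ^ 2 := by
    rw [hu, @norm_sub_sq ℂ, norm_smul, inner_smul_left, Complex.norm_real, mul_pow,
      Real.norm_eq_abs, sq_abs]
    simp
    ring
  have e2 : (inner ℂ u (N u)).re = g ^ 2 * (inner ℂ p (N p)).re - 2 * g * ‖N p‖ ^ 2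
      + (inner ℂ (N p) (N (N p))).re := by
    have e3 : inner ℂ p (N (N p)) = inner ℂ (N p) (N p) := (hN _ _).symm
    have e4 : (inner ℂ (N p) (N p)).re = ‖N p‖ ^ 2 := by
      rw [inner_self_eq_norm_sq_to_K]; norm_cast
    rw [hu]
    simp only [map_sub, map_smul, inner_sub_left, inner_sub_right, inner_smul_left,
      inner_smul_right, e3, Complex.sub_re, Complex.conj_ofReal, Complex.re_ofReal_mul, e4]
    ring
  rw [e1, e2] at h2
  nlinarith [mul_nonneg (sub_nonneg.2 hg1) (sub_nonneg.2 h1)]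

lemma mulE_mul {l m n : ℕ} (A : Matrix (Fin l) (Fin m) ℂ) (B : Matrix (Fin m) (Fin n) ℂ)
    (v : EuclideanSpace ℂ (Fin n)) : mulE (A * B) v = mulE A (mulE B v) := by
  simp [mulE, Matrix.toEuclideanLin, Matrix.toLpLin_apply]

lemma inner_mulE_conjTranspose {m n : ℕ} (A : Matrix (Fin m) (Fin n) ℂ)
    (x : EuclideanSpace ℂ (Fin m)) (y : EuclideanSpace ℂ (Fin n)) :
    inner ℂ (mulE Aᴴ x) y = inner ℂ x (mulE A y) := by
  simp only [mulE]
  rw [Matrix.toEuclideanLin_conjTranspose_eq_adjoint, LinearMap.adjoint_inner_left]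

lemma norm_mulE_sq {m n : ℕ} (A : Matrix (Fin m) (Fin n) ℂ)
    (x : EuclideanSpace ℂ (Fin n)) :
    ‖mulE A x‖ ^ 2 = (inner ℂ x (mulE (Aᴴ * A) x)).re := by
  rw [mulE_mul, ← Complex.conj_re, inner_conj_symm, inner_mulE_conjTranspose, inner_self_eq_norm_sq_to_K]
  norm_cast

/-- `I - t PPᴴAᴴA` contracts the energy norm `‖A ·‖` by `g` on the range of `P`: on vectors `P x` it
acts as `N = I - t PᴴAᴴAP` on `x`, and `t ‖APx‖² = ⟨x, (1 - N) x⟩`. -/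
lemma energy_contraction {m n : ℕ} (A : Matrix (Fin m) (Fin n) ℂ)
    (P : Matrix (Fin n) (Fin n) ℂ) {t g : ℝ} (ht : 0 < t) (hg1 : g ≤ 1)
    (hs : specNorm ((1 : Matrix (Fin n) (Fin n) ℂ) - (t : ℂ) • (Pᴴ * Aᴴ * A * P)) ≤ g)
    (x : EuclideanSpace ℂ (Fin n)) :
    ‖mulE A (mulE P x - (t : ℂ) • mulE P (mulE Pᴴ (mulE (Aᴴ * A) (mulE P x))))‖ ^ 2 ≤
      g ^ 2 * ‖mulE A (mulE P x)‖ ^ 2 := by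
  set C := A * P with hC
  have hX : Pᴴ * Aᴴ * A * P = Cᴴ * C := by
    rw [hC, Matrix.conjTranspose_mul]; simp only [Matrix.mul_assoc]
  rw [hX] at hs
  set N := Matrix.toEuclideanLin ((1 : Matrix (Fin n) (Fin n) ℂ) - (t : ℂ) • (Cᴴ * C)) with hNdef
  have hNx : ∀ z, N z = z - (t : ℂ) • mulE (Cᴴ * C) z := by
    intro z
    rw [hNdef, map_sub, map_smul]
    simp [mulE, Matrix.toEuclideanLin]
  have hXs : ∀ z z', inner ℂ (mulE (Cᴴ * C) z) z' = inner ℂ z (mulE (Cᴴ * C) z') := by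
    intro z z'
    rw [← inner_mulE_conjTranspose, (Matrix.isHermitian_conjTranspose_mul_self C).eq]
  have hsym : N.IsSymmetric := by
    intro z z'
    rw [hNx, hNx, inner_sub_left, inner_sub_right, inner_smul_left, inner_smul_right, hXs,
      Complex.conj_ofReal]
  have hbd : ∀ z, ‖N z‖ ≤ g * ‖z‖ := by
    intro z
    refine ((LinearMap.toContinuousLinearMap N).le_opNorm z).trans ?_
    exact mul_le_mul_of_nonneg_right hs (norm_nonneg z)
  have key : ∀ z, ‖z‖ ^ 2 - (inner ℂ z (N z)).re = t * ‖mulE C z‖ ^ 2 := by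
    intro z
    rw [norm_mulE_sq, hNx, inner_sub_right, inner_smul_right, Complex.sub_re,
      Complex.re_ofReal_mul, show (inner ℂ z z).re = ‖z‖ ^ 2 from (norm_sq_eq_re_inner (𝕜 := ℂ) z).symm]
    ring
  have h := sym_contraction N hsym hg1 hbd x
  rw [key, key, mul_left_comm] at h
  have h' := le_of_mul_le_mul_left h ht
  have e : mulE P x - (t : ℂ) • mulE P (mulE Pᴴ (mulE (Aᴴ * A) (mulE P x))) = mulE P (N x) := by
    rw [hNx]
    have : mulE (Cᴴ * C) x = mulE Pᴴ (mulE (Aᴴ * A) (mulE P x)) := by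
      simp only [← mulE_mul]
      rw [← hX]; simp only [Matrix.mul_assoc]
    rw [this]
    simp [mulE]
  rw [e, ← mulE_mul, ← mulE_mul]
  exact h'

lemma inner_basis_mulE {m n : ℕ} {A : Matrix (Fin m) (Fin n) ℂ} {σ : Fin n → ℝ}
    (B : Fin n → EuclideanSpace ℂ (Fin n))
    (hB : ∀ i, mulE (Aᴴ * A) (B i) = ((σ i ^ 2 : ℝ) : ℂ) • B i)
    (x : EuclideanSpace ℂ (Fin n)) (j : Fin n) :
    inner ℂ (B j) (mulE (Aᴴ * A) x) = ((σ j ^ 2 : ℝ) : ℂ) * inner ℂ (B j) x := by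
  rw [← inner_mulE_conjTranspose, Matrix.conjTranspose_mul, Matrix.conjTranspose_conjTranspose,
    hB, inner_smul_left, Complex.conj_ofReal]

lemma norm_mulE_sq_eq_sum {m n : ℕ} {A : Matrix (Fin m) (Fin n) ℂ} {σ : Fin n → ℝ}
    (B : OrthonormalBasis (Fin n) ℂ (EuclideanSpace ℂ (Fin n)))
    (hB : ∀ i, mulE (Aᴴ * A) (B i) = ((σ i ^ 2 : ℝ) : ℂ) • B i)
    (x : EuclideanSpace ℂ (Fin n)) :
    ‖mulE A x‖ ^ 2 = ∑ j, σ j ^ 2 * ‖inner ℂ (B j) x‖ ^ 2 := by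
  rw [norm_mulE_sq, ← B.sum_inner_mul_inner, Complex.re_sum]
  refine Finset.sum_congr rfl fun j _ => ?_
  rw [inner_basis_mulE B hB, mul_left_comm, Complex.re_ofReal_mul, ← inner_conj_symm,
    Complex.conj_mul']
  norm_cast

/-- The estimate for one step `v' = v - t w` with fixed step size `t`: any lower bound `θ` of the
Rayleigh quotient of `v'` satisfies the asserted inequality, with contraction number `g` in place
of `γ`. Here `l`, `L` and `lam` stand for `σᵢ²`, `σᵢ₋₁²` and `‖Av‖²`. -/
lemma step_bound
    {m n : ℕ} (A : Matrix (Fin m) (Fin n) ℂ)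
    (σ : Fin n → ℝ) (B : OrthonormalBasis (Fin n) ℂ (EuclideanSpace ℂ (Fin n)))
    (hB : ∀ i, mulE (Aᴴ * A) (B i) = ((σ i ^ 2 : ℝ) : ℂ) • B i) (hpos : ∀ i, 0 < σ i)
    (P : Matrix (Fin n) (Fin n) ℂ) (hPinv : IsUnit P.det) {l L lam θ g t q : ℝ}
    (hl : 0 < l) (hσ : ∀ j, σ j ^ 2 ≤ l ∨ L ≤ σ j ^ 2)
    (ht : 0 < t) (hg0 : 0 < g) (hg1 : g < 1)
    (hs : specNorm ((1 : Matrix (Fin n) (Fin n) ℂ) - (t : ℂ) • (Pᴴ * Aᴴ * A * P)) ≤ g)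
    (v : EuclideanSpace ℂ (Fin n)) (hv : ‖v‖ = 1) (hlam : lam = ‖mulE A v‖ ^ 2)
    (hlo : l ≤ lam) (hhi : lam < L)
    (w : EuclideanSpace ℂ (Fin n))
    (hw : w = mulE P (mulE Pᴴ (mulE Aᴴ (mulE A v) - (lam : ℂ) • v)))
    (hθ : θ * ‖v - (t : ℂ) • w‖ ^ 2 ≤ ‖mulE A (v - (t : ℂ) • w)‖ ^ 2) (hθL : θ < L)
    (hq : q = g + (1 - g) * l / L) :
    (θ - l) / (L - θ) ≤ q ^ 2 * ((lam - l) / (L - lam)) := by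
  have hlam0 : 0 < lam := by linarith
  have hL0 : 0 < L := by linarith
  have hsum1 : ∑ j, ‖inner ℂ (B j) v‖ ^ 2 = 1 := by
    rw [B.sum_sq_norm_inner_right, hv]; norm_num
  have hsum2 : ∑ j, σ j ^ 2 * ‖inner ℂ (B j) v‖ ^ 2 = lam := by
    rw [hlam, norm_mulE_sq_eq_sum B hB]
  rw [← mulE_mul Aᴴ A v] at hw
  -- the residual `AᴴAv - λv`, and `p` its preimage under `AᴴA`
  set r := mulE (Aᴴ * A) v - (lam : ℂ) • v with hr
  set p := ∑ j, ((1 - lam / σ j ^ 2 : ℝ) * inner ℂ (B j) v : ℂ) • B j with hp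
  have hpj : ∀ j, inner ℂ (B j) p = (1 - lam / σ j ^ 2 : ℝ) * inner ℂ (B j) v := by
    intro j
    rw [hp, B.orthonormal.inner_right_fintype]
  have hHp : mulE (Aᴴ * A) p = r := by
    refine InnerProductSpace.ext_inner_left_basis B.toBasis fun j => ?_
    rw [B.coe_toBasis]
    rw [inner_basis_mulE B hB, hpj, hr, inner_sub_right, inner_basis_mulE B hB, inner_smul_right]
    have : (σ j : ℂ) ≠ 0 := by exact_mod_cast (hpos j).ne'
    push_cast
    field_simp
  set v' := v - (t : ℂ) • w with hv'
  have hv'0 : 0 < ‖v'‖ := by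
    rw [norm_pos_iff]
    -- `v = t w` would give `⟨r, v⟩ = t ‖Pᴴ r‖²`, but `r` is orthogonal to `v`
    intro h0
    have hvw : v = (t : ℂ) • w := sub_eq_zero.1 h0
    have hrv : inner ℂ r v = 0 := by
      have h1 : inner ℂ (mulE (Aᴴ * A) v) v = (lam : ℂ) := by
        rw [mulE_mul, inner_mulE_conjTranspose, inner_self_eq_norm_sq_to_K, hlam]
        norm_cast
      rw [hr, inner_sub_left, h1, inner_smul_left, inner_self_eq_norm_sq_to_K, hv]
      simp
    have hPr : mulE Pᴴ r = 0 := by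
      rw [hvw, inner_smul_right, hw, ← inner_mulE_conjTranspose, mul_eq_zero] at hrv
      rcases hrv with h | h
      · exact absurd (by exact_mod_cast h) ht.ne'
      · exact inner_self_eq_zero.1 h
    rw [hw, hPr] at hvw
    simp [mulE] at hvw
    simp [hvw] at hv
  have hcontr : ‖mulE A (p - (t : ℂ) • w)‖ ^ 2 ≤ g ^ 2 * ‖mulE A p‖ ^ 2 := by
    have h := energy_contraction A P ht hg1.le hs (mulE P⁻¹ p)
    have hPp : mulE P (mulE P⁻¹ p) = p := by
      rw [← mulE_mul, Matrix.mul_nonsing_inv _ hPinv]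
      simp [mulE, Matrix.toEuclideanLin]
    rwa [hPp, hHp, ← hw] at h
  have hpw : ∀ j, inner ℂ (B j) (p - (t : ℂ) • w) =
      inner ℂ (B j) v' - (lam / σ j ^ 2 : ℝ) * inner ℂ (B j) v := by
    intro j
    rw [hv', inner_sub_right, inner_sub_right, hpj]
    push_cast
    ring
  rw [norm_mulE_sq_eq_sum B hB, norm_mulE_sq_eq_sum B hB] at hcontr
  simp only [hpw, hpj] at hcontr
  have hLl : 1 / L < 1 / lam := one_div_lt_one_div_of_lt hlam0 hhi
  have hll : 1 / lam ≤ 1 / l := one_div_le_one_div_of_le hl hlo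
  have hmain := diagonal_bound (a := 1 / l) (b := 1 / L) (μ := 1 / lam) (g := g) (q := q)
    (fun j => 1 / σ j ^ 2) (fun j => σ j * inner ℂ (B j) v)
    (fun j => (σ j / lam : ℝ) * inner ℂ (B j) v') (by positivity) hLl hll hg0 hg1
    (by rw [hq]; field_simp) rfl rfl (fun j => by have := hpos j; positivity)
    (fun j => by
      rcases hσ j with h | h
      · exact Or.inr (one_div_le_one_div_of_le (by have := hpos j; positivity) h)
      · exact Or.inl (one_div_le_one_div_of_le hL0 h))
    (by
      have : ∀ j, (1 / σ j ^ 2 - 1 / lam) * ‖(σ j : ℂ) * inner ℂ (B j) v‖ ^ 2 =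
          ‖inner ℂ (B j) v‖ ^ 2 - 1 / lam * (σ j ^ 2 * ‖inner ℂ (B j) v‖ ^ 2) := by
        intro j
        have := (hpos j).ne'
        rw [norm_mul, Complex.norm_real, mul_pow, Real.norm_eq_abs, sq_abs]
        field_simp
      simp only [this, Finset.sum_sub_distrib, ← Finset.mul_sum, hsum1, hsum2]
      field_simp
      norm_num)
    (by
      have e1 : ∀ j, ‖((σ j / lam : ℝ) : ℂ) * inner ℂ (B j) v' -
          ((1 / σ j ^ 2 : ℝ) : ℂ) * ((σ j : ℂ) * inner ℂ (B j) v)‖ ^ 2 =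
          1 / lam ^ 2 * (σ j ^ 2 *
            ‖inner ℂ (B j) v' - (lam / σ j ^ 2 : ℝ) * inner ℂ (B j) v‖ ^ 2) := by
        intro j
        have h1 : (σ j : ℂ) ≠ 0 := by exact_mod_cast (hpos j).ne'
        have h2 : (lam : ℂ) ≠ 0 := by exact_mod_cast hlam0.ne'
        have : ((σ j / lam : ℝ) : ℂ) * inner ℂ (B j) v' -
          ((1 / σ j ^ 2 : ℝ) : ℂ) * ((σ j : ℂ) * inner ℂ (B j) v) = ((σ j / lam : ℝ) : ℂ) *
            (inner ℂ (B j) v' - (lam / σ j ^ 2 : ℝ) * inner ℂ (B j) v) := by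
          push_cast
          field_simp
        rw [this, norm_mul, Complex.norm_real, mul_pow, Real.norm_eq_abs, sq_abs]
        ring
      have e2 : ∀ j, (1 / σ j ^ 2 - 1 / lam) ^ 2 * ‖(σ j : ℂ) * inner ℂ (B j) v‖ ^ 2 =
          1 / lam ^ 2 * (σ j ^ 2 * ‖((1 - lam / σ j ^ 2 : ℝ) : ℂ) * inner ℂ (B j) v‖ ^ 2) := by
        intro j
        have := (hpos j).ne'
        rw [norm_mul, norm_mul, Complex.norm_real, Complex.norm_real, mul_pow, mul_pow,
          Real.norm_eq_abs, sq_abs, Real.norm_eq_abs, sq_abs]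
        field_simp
        ring
      simp only [e1, e2, ← Finset.mul_sum]
      rw [mul_left_comm]
      exact mul_le_mul_of_nonneg_left hcontr (by positivity))
  set Q := 1 / lam - 1 / L + q ^ 2 * (1 / l - 1 / lam) with hQ
  set c := (1 / l * (1 / lam - 1 / L) + q ^ 2 * (1 / l - 1 / lam) * (1 / L)) / Q with hc
  have hQ0 : 0 < Q := by
    have := mul_nonneg (sq_nonneg q) (sub_nonneg.2 hll)
    linarith
  have hc0 : 0 ≤ c := by
    have := sub_nonneg.2 hll
    have := sub_nonneg.2 hLl.le
    positivity
  have hcv : c * ‖mulE A v'‖ ^ 2 ≤ ‖v'‖ ^ 2 := by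
    have e3 : ∀ j, (1 / σ j ^ 2 - c) * ‖((σ j / lam : ℝ) : ℂ) * inner ℂ (B j) v'‖ ^ 2 =
        1 / lam ^ 2 * (‖inner ℂ (B j) v'‖ ^ 2 - c * (σ j ^ 2 * ‖inner ℂ (B j) v'‖ ^ 2)) := by
      intro j
      have := (hpos j).ne'
      rw [norm_mul, Complex.norm_real, mul_pow, Real.norm_eq_abs, sq_abs]
      field_simp
    simp only [e3, ← Finset.mul_sum, Finset.sum_sub_distrib] at hmain
    rw [← norm_mulE_sq_eq_sum B hB, B.sum_sq_norm_inner_right] at hmain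
    have := nonneg_of_mul_nonneg_right hmain (by positivity)
    linarith
  have hcθ : c * θ ≤ 1 := by
    have h1 := mul_le_mul_of_nonneg_left hθ hc0
    have h2 : (c * θ) * ‖v'‖ ^ 2 ≤ 1 * ‖v'‖ ^ 2 := by linarith
    exact le_of_mul_le_mul_right h2 (by positivity)
  rw [hc, div_mul_eq_mul_div, div_le_one hQ0, hQ] at hcθ
  have hpoly : (θ - l) * (L - lam) ≤ q ^ 2 * (lam - l) * (L - θ) := by
    have e : q ^ 2 * (lam - l) * (L - θ) - (θ - l) * (L - lam) = (l * L * lam) *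
      ((1 / lam - 1 / L + q ^ 2 * (1 / l - 1 / lam)) -
        (1 / l * (1 / lam - 1 / L) + q ^ 2 * (1 / l - 1 / lam) * (1 / L)) * θ) := by
      field_simp
      ring
    have := mul_nonneg (by positivity : 0 ≤ l * L * lam) (sub_nonneg.2 hcθ)
    linarith
  rw [← mul_div_assoc, div_le_div_iff₀ (by linarith) (by linarith)]
  exact hpoly

/-- Preconditioned steepest descent, single-step bound; Neymeyr:
with `γ := inf_{t>0} ‖I − t·PᴴAᴴAP‖`, a unit vector `v` with `σᵢ ≤ ‖Av‖ < σᵢ₋₁`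
(1-based indexing: here `i : ℕ` with `1 ≤ i < n` indexes `σ` 0-based, so `σ ⟨i⟩` is the paper's
`σᵢ₊₁` and `σ ⟨i-1⟩` the paper's `σᵢ`), search direction
`w := P(Pᴴ(Aᴴ(Av) − ‖Av‖²·v))`, and `v_PSD` a unit-norm minimizer of `‖Az‖` over the unit
sphere of `span{v,w}`: either `‖A v_PSD‖ ≤ σᵢ`, or the error ratio contracts by
`q² = (γ + (1−γ)/(1+gapᵢ))²`. -/
theorem psd_single_step_bound
    {m n : ℕ} (A : Matrix (Fin m) (Fin n) ℂ)
    (hrank : Function.Injective (mulE A))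
    (σ : Fin n → ℝ) (hσ : HasSingularValues A σ) (hpos : ∀ i, 0 < σ i)
    (P : Matrix (Fin n) (Fin n) ℂ) (hPinv : IsUnit P.det)
    (γ : ℝ)
    (hγ : γ = sInf {r : ℝ | ∃ t : ℝ, 0 < t ∧
      r = specNorm ((1 : Matrix (Fin n) (Fin n) ℂ) - ((t : ℝ) : ℂ) • (Pᴴ * Aᴴ * A * P))})
    (i : ℕ) (hi1 : 1 ≤ i) (hin : i < n)
    (v : EuclideanSpace ℂ (Fin n)) (hv : ‖v‖ = 1)
    (hlo : σ ⟨i, hin⟩ ≤ ‖mulE A v‖) (hhi : ‖mulE A v‖ < σ ⟨i - 1, by omega⟩)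
    (w : EuclideanSpace ℂ (Fin n))
    (hw : w = mulE P (mulE Pᴴ
      (mulE Aᴴ (mulE A v) - ((‖mulE A v‖ ^ 2 : ℝ) : ℂ) • v)))
    (vPSD : EuclideanSpace ℂ (Fin n)) (hPSDnorm : ‖vPSD‖ = 1)
    (hPSDmem : vPSD ∈ Submodule.span ℂ ({v, w} : Set (EuclideanSpace ℂ (Fin n))))
    (hPSDmin : ∀ z ∈ Submodule.span ℂ ({v, w} : Set (EuclideanSpace ℂ (Fin n))),
      ‖z‖ = 1 → ‖mulE A vPSD‖ ≤ ‖mulE A z‖)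
    (gapi q : ℝ)
    (hgapi : gapi = (σ ⟨i - 1, by omega⟩ ^ 2 - σ ⟨i, hin⟩ ^ 2) / σ ⟨i, hin⟩ ^ 2)
    (hq : q = γ + (1 - γ) / (1 + gapi)) :
    ‖mulE A vPSD‖ ≤ σ ⟨i, hin⟩ ∨
      (‖mulE A vPSD‖ ^ 2 - σ ⟨i, hin⟩ ^ 2) / (σ ⟨i - 1, by omega⟩ ^ 2 - ‖mulE A vPSD‖ ^ 2) ≤
        q ^ 2 * ((‖mulE A v‖ ^ 2 - σ ⟨i, hin⟩ ^ 2) /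
          (σ ⟨i - 1, by omega⟩ ^ 2 - ‖mulE A v‖ ^ 2)) := by
  obtain ⟨hanti, -, B₀, hB₀, hB₀eig⟩ := hσ
  obtain ⟨B, hBB⟩ : ∃ B : OrthonormalBasis (Fin n) ℂ (EuclideanSpace ℂ (Fin n)), ⇑B = B₀ := by
    have hspan := hB₀.linearIndependent.span_eq_top_of_card_eq_finrank' (by simp)
    exact ⟨OrthonormalBasis.mk hB₀ hspan.ge, OrthonormalBasis.coe_mk _ _⟩
  have hB : ∀ i, mulE (Aᴴ * A) (B i) = ((σ i ^ 2 : ℝ) : ℂ) • B i := by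
    rw [hBB]; exact hB₀eig
  set s := σ ⟨i, hin⟩ with hs
  set S := σ ⟨i - 1, by omega⟩ with hS
  have hs0 : 0 < s := hpos _
  have hS0 : 0 < S := hpos _
  have hsplit : ∀ j, σ j ^ 2 ≤ s ^ 2 ∨ S ^ 2 ≤ σ j ^ 2 := by
    intro j
    by_cases hj : i ≤ j.1
    · exact Or.inl (pow_le_pow_left₀ (hpos j).le (hanti (Fin.mk_le_of_le_val hj)) 2)
    · refine Or.inr (pow_le_pow_left₀ hS0.le (hanti ?_) 2)
      rw [Fin.le_def]
      show j.1 ≤ i - 1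
      omega
  have hmono : ‖mulE A vPSD‖ ≤ ‖mulE A v‖ :=
    hPSDmin v (Submodule.subset_span (by simp)) hv
  have hlo2 : s ^ 2 ≤ ‖mulE A v‖ ^ 2 := pow_le_pow_left₀ hs0.le hlo 2
  have hhi2 : ‖mulE A v‖ ^ 2 < S ^ 2 := pow_lt_pow_left₀ hhi (norm_nonneg _) two_ne_zero
  have hmono2 : ‖mulE A vPSD‖ ^ 2 ≤ ‖mulE A v‖ ^ 2 := pow_le_pow_left₀ (norm_nonneg _) hmono 2
  have hq' : q = γ + (1 - γ) * s ^ 2 / S ^ 2 := by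
    rw [hq, hgapi]
    field_simp
    ring
  right
  rcases le_or_gt 1 γ with hγ1 | hγ1
  · -- here `q ≥ 1`, and monotonicity of the Rayleigh quotient suffices
    have hq1 : 1 ≤ q := by
      have h1 : s ^ 2 / S ^ 2 ≤ 1 := by
        rw [div_le_one (by positivity)]; linarith
      rw [hq', mul_div_assoc]
      nlinarith
    have h0 : 0 ≤ (‖mulE A v‖ ^ 2 - s ^ 2) / (S ^ 2 - ‖mulE A v‖ ^ 2) :=
      div_nonneg (by linarith) (by linarith)
    refine le_trans ?_ (le_mul_of_one_le_left h0 (one_le_pow₀ hq1))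
    exact div_le_div₀ (by linarith) (by linarith) (by linarith) (by linarith)
  · have hstep : ∀ g, γ < g → g < 1 →
        (‖mulE A vPSD‖ ^ 2 - s ^ 2) / (S ^ 2 - ‖mulE A vPSD‖ ^ 2) ≤
          (g + (1 - g) * s ^ 2 / S ^ 2) ^ 2 *
            ((‖mulE A v‖ ^ 2 - s ^ 2) / (S ^ 2 - ‖mulE A v‖ ^ 2)) := by
      intro g hg hg1
      rw [hγ] at hg
      obtain ⟨r, ⟨t, ht, hr⟩, hrg⟩ := exists_lt_of_csInf_lt (by exact ⟨_, 1, one_pos, rfl⟩) hg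
      have hr0 : 0 ≤ r := by rw [hr]; exact norm_nonneg _
      refine step_bound A σ B hB hpos P hPinv (by positivity) hsplit ht (hr0.trans_lt hrg) hg1
        (hr ▸ hrg.le) v hv rfl hlo2 hhi2 w hw ?_ (by linarith) rfl
      -- homogeneity extends minimality over unit vectors to `v - t w`
      have hmem : v - (t : ℂ) • w ∈ Submodule.span ℂ ({v, w} : Set (EuclideanSpace ℂ (Fin n))) :=
        Submodule.sub_mem _ (Submodule.subset_span (by simp))
          (Submodule.smul_mem _ _ (Submodule.subset_span (by simp)))
      generalize v - (t : ℂ) • w = z at hmem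
      rcases eq_or_ne z 0 with rfl | hz
      · simp
      have hz0 : 0 < ‖z‖ := norm_pos_iff.2 hz
      have h := hPSDmin (((‖z‖⁻¹ : ℝ) : ℂ) • z) (Submodule.smul_mem _ _ hmem)
        (by rw [norm_smul, Complex.norm_real, norm_inv, norm_norm, inv_mul_cancel₀ hz0.ne'])
      have e : mulE A (((‖z‖⁻¹ : ℝ) : ℂ) • z) = ((‖z‖⁻¹ : ℝ) : ℂ) • mulE A z := by
        simp only [mulE, map_smul]
      rw [e, norm_smul, Complex.norm_real, norm_inv, norm_norm, inv_mul_eq_div,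
        le_div_iff₀ hz0] at h
      rw [← mul_pow]
      exact pow_le_pow_left₀ (by positivity) h 2
    have hcont : Filter.Tendsto (fun g : ℝ => (g + (1 - g) * s ^ 2 / S ^ 2) ^ 2 *
            ((‖mulE A v‖ ^ 2 - s ^ 2) / (S ^ 2 - ‖mulE A v‖ ^ 2))) (nhdsWithin γ (Set.Ioi γ))
        (nhds (q ^ 2 * ((‖mulE A v‖ ^ 2 - s ^ 2) / (S ^ 2 - ‖mulE A v‖ ^ 2)))) := by
      rw [hq']
      refine Filter.Tendsto.mono_left (Continuous.tendsto ?_ γ) nhdsWithin_le_nhds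
      fun_prop
    refine ge_of_tendsto hcont ?_
    filter_upwards [Ioo_mem_nhdsGT hγ1] with g hg
    exact hstep g hg.1 hg.2
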